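/- Let T=(V,E) be a leafless directed tree with a root, let 1 < q < ∞, let λ be the constant sequence λ_v = 1 for each v ∈ V, and assume the backward shift B is bounded on L^q(T,λ). Then B is hypercyclic if and only if the tree T has no free ends. -/

import Mathlib

open Filter

attribute [local instance] Classical.propDecidable
open scoped ENNReal

/-- A directed tree: a locally finite directed graph on a (countably infinite)
vertex set with no directed circuits, whose underlying undirected graph is
connected, and in which every vertex has indegree at most one. -/
structure DirTree (V : Type) where
  E : V → V → Prop
  finIn : ∀ v : V, {u : V | E u v}.Finite
  finOut : ∀ v : V, {u : V | E v u}.Finite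
  noCircuit : ∀ (n : ℕ) (c : Fin (n + 1) → V), Function.Injective c →
    (∀ i : Fin n, E (c i.castSucc) (c i.succ)) → ¬ E (c (Fin.last n)) (c 0)
  conn : (SimpleGraph.fromRel E).Connected
  indeg : ∀ ⦃u w v : V⦄, E u v → E w v → u = w

namespace DirTree

variable {V : Type} (T : DirTree V)

/-- A root is a vertex of indegree zero. -/
def IsRoot (r : V) : Prop := ∀ u : V, ¬ T.E u r

/-- The set of children of a vertex. -/
def child (u : V) : Set V := {v : V | T.E u v}

/-- A leaf is a vertex of outdegree zero. -/
def IsLeaf (u : V) : Prop := ¬ (T.child u).Nonempty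

/-- The (forward) shift `(S f)(v) = f (parent v)`, with `(S f)(root) = 0`. -/
noncomputable def shift (f : V → ℂ) (v : V) : ℂ :=
  if h : ∃ u : V, T.E u v then f h.choose else 0

/-- The backward shift `(B f)(u) = ∑_{v ∈ child u} f v`. -/
noncomputable def bwd (f : V → ℂ) (u : V) : ℂ :=
  ∑' v : T.child u, f v.1

/-- The operator `(S* g)(u) = ∑_{v ∈ child u} g v · λ_v / λ_u`. -/
noncomputable def sstar (lam : V → ℝ) (g : V → ℂ) (u : V) : ℂ :=
  ∑' v : T.child u, g v.1 * ((lam v.1 / lam u : ℝ) : ℂ)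

/-- `childN n u` is the set of vertices `v` with `parentⁿ v = u`. -/
def childN (T : DirTree V) : ℕ → V → Set V
  | 0, u => {u}
  | n + 1, u => {w : V | ∃ v ∈ T.child u, w ∈ childN T n v}

/-- `γ(u,n)`, the cardinality of `childN n u`. -/
noncomputable def gam (u : V) (n : ℕ) : ℕ := (T.childN n u).ncard

/-- The `n`-th ancestor `parentⁿ u` of `u` (junk value `u` if it does not exist). -/
noncomputable def anc (u : V) (n : ℕ) : V :=
  if h : ∃ w : V, u ∈ T.childN n w then h.choose else u

/-- A leafless directed tree has a free end if some vertex is such that all of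
its descendants have outdegree one. -/
def FreeEnd : Prop :=
  ∃ w : V, ∀ n : ℕ, 0 < n → ∀ v ∈ T.childN n w, (T.child v).ncard = 1

end DirTree

/-- Membership in the weighted space `L^p(T,λ)`. -/
def MemLp' {V : Type} (lam : V → ℝ) (p : ℝ) (f : V → ℂ) : Prop :=
  Summable (fun v => ‖f v‖ ^ p * lam v)

/-- The norm of the weighted space `L^p(T,λ)`. -/
noncomputable def pNorm {V : Type} (lam : V → ℝ) (p : ℝ) (f : V → ℂ) : ℝ :=
  (∑' v, ‖f v‖ ^ p * lam v) ^ (1 / p)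

/-- Boundedness of an operator on `L^p(T,λ)`. -/
def BoundedOn {V : Type} (lam : V → ℝ) (p : ℝ) (A : (V → ℂ) → (V → ℂ)) : Prop :=
  ∃ C : ℝ, 0 ≤ C ∧ ∀ f : V → ℂ, MemLp' lam p f →
    MemLp' lam p (A f) ∧ pNorm lam p (A f) ≤ C * pNorm lam p f

/-- Hypercyclicity of an operator on `L^p(T,λ)`: some `f ∈ L^p(T,λ)` has dense
orbit `{Aⁿ f : n ∈ ℕ}`. -/
def Hypercyclic {V : Type} (lam : V → ℝ) (p : ℝ) (A : (V → ℂ) → (V → ℂ)) : Prop :=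
  ∃ f : V → ℂ, MemLp' lam p f ∧ ∀ g : V → ℂ, MemLp' lam p g → ∀ ε : ℝ, 0 < ε →
    ∃ n : ℕ, MemLp' lam p (A^[n] f - g) ∧ pNorm lam p (A^[n] f - g) < ε

/-! Values of the iterates are sums over generations, `(Bⁿ f) u = ∑_{v ∈ childN n u} f v`. Below a
free end these sums have at most one term, so `|(Bⁿ f) v| ≤ ‖f‖_q` for all `n`: no orbit is dense.
Without free ends the generation sizes `γ(u,n)` tend to infinity, and spreading a unit mass at `u`
uniformly over `childN n u` gives a preimage of it under `Bⁿ` of norm `γ(u,n)^(1/q - 1)`, which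
tends to `0` because `q > 1`. With a root, `Bⁿ` eventually annihilates every finitely supported
function, so the hypercyclicity criterion applies to the span of the unit masses. -/

/-! ### The hypercyclicity criterion -/

section Universality

variable {X Y : Type*} [TopologicalSpace X] [TopologicalSpace Y]

theorem exists_dense_range_of_transitive [BaireSpace X] [Nonempty X]
    [SecondCountableTopology Y] {ι : Type*} {F : ι → X → Y} (hF : ∀ i, Continuous (F i))
    (htrans : ∀ U : Set X, IsOpen U → U.Nonempty → ∀ W : Set Y, IsOpen W → W.Nonempty →
      ∃ i, (U ∩ F i ⁻¹' W).Nonempty) :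
    ∃ x, Dense (Set.range fun i ↦ F i x) := by
  have basis := TopologicalSpace.isBasis_countableBasis Y
  have isOpen_hit : ∀ W ∈ TopologicalSpace.countableBasis Y, IsOpen (⋃ i, F i ⁻¹' W) :=
    fun W hW ↦ isOpen_iUnion fun i ↦ (basis.isOpen hW).preimage (hF i)
  have dense_hit : ∀ W ∈ TopologicalSpace.countableBasis Y, Dense (⋃ i, F i ⁻¹' W) := by
    refine fun W hW ↦ dense_iff_inter_open.2 fun U hU hU' ↦ ?_
    obtain ⟨i, hi⟩ := htrans U hU hU' W (basis.isOpen hW)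
      (TopologicalSpace.nonempty_of_mem_countableBasis hW)
    exact hi.mono (Set.inter_subset_inter_right U (Set.subset_iUnion_of_subset i subset_rfl))
  obtain ⟨x, hx⟩ := (dense_biInter_of_isOpen isOpen_hit
    (TopologicalSpace.countable_countableBasis Y) dense_hit).nonempty
  refine ⟨x, basis.dense_iff.2 fun W hW _ ↦ ?_⟩
  obtain ⟨i, hi⟩ := Set.mem_iUnion.1 (Set.mem_iInter₂.1 hx W hW)
  exact ⟨F i x, hi, i, rfl⟩

variable {R : Type*} [Semiring R] [AddCommMonoid X] [Module R X] [ContinuousAdd X]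
  [AddCommMonoid Y] [Module R Y] [ContinuousAdd Y]

theorem exists_dense_range_of_tendsto_zero [BaireSpace X] [SecondCountableTopology Y]
    {A : ℕ → X →L[R] Y} {D : Set X} (hD : Dense D) {D' : Set Y} (hD' : Dense D')
    (hzero : ∀ x ∈ D, Tendsto (fun n ↦ A n x) atTop (nhds 0))
    (hpre : ∀ y ∈ D', ∃ s : ℕ → X, Tendsto s atTop (nhds 0) ∧ ∀ n, A n (s n) = y) :
    ∃ x, Dense (Set.range fun n ↦ A n x) := by
  refine exists_dense_range_of_transitive (fun n ↦ (A n).continuous) fun U hU hU' W hW hW' ↦ ?_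
  obtain ⟨x, hxU, hxD⟩ := dense_iff_inter_open.1 hD U hU hU'
  obtain ⟨y, hyW, hyD'⟩ := dense_iff_inter_open.1 hD' W hW hW'
  obtain ⟨s, hs, hAs⟩ := hpre y hyD'
  have tendsto_x : Tendsto (fun n ↦ x + s n) atTop (nhds x) := by
    simpa using tendsto_const_nhds.add hs
  have tendsto_y : Tendsto (fun n ↦ A n (x + s n)) atTop (nhds y) := by
    simpa [hAs] using (hzero x hxD).add_const y
  obtain ⟨n, hnU, hnW⟩ := ((tendsto_x.eventually_mem (hU.mem_nhds hxU)).and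
    (tendsto_y.eventually_mem (hW.mem_nhds hyW))).exists
  exact ⟨n, x + s n, hnU, hnW⟩

theorem exists_dense_range_of_dense_span [ContinuousConstSMul R X] [ContinuousConstSMul R Y]
    [BaireSpace X] [SecondCountableTopology Y] {A : ℕ → X →L[R] Y}
    {S : Set X} (hS : Dense (Submodule.span R S : Set X))
    {S' : Set Y} (hS' : Dense (Submodule.span R S' : Set Y))
    (hzero : ∀ x ∈ S, Tendsto (fun n ↦ A n x) atTop (nhds 0))
    (hpre : ∀ y ∈ S', ∃ s : ℕ → X, Tendsto s atTop (nhds 0) ∧ ∀ n, A n (s n) = y) :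
    ∃ x, Dense (Set.range fun n ↦ A n x) := by
  refine exists_dense_range_of_tendsto_zero hS hS' (fun x hx ↦ ?_) fun y hy ↦ ?_
  · induction hx using Submodule.span_induction with
    | mem x hx => exact hzero x hx
    | zero => simpa only [map_zero] using tendsto_const_nhds
    | add x x' _ _ hx hx' => simpa using hx.add hx'
    | smul a x _ hx => simpa using hx.const_smul a
  · induction hy using Submodule.span_induction with
    | mem y hy => exact hpre y hy
    | zero => exact ⟨0, tendsto_const_nhds, by simp⟩
    | add y y' _ _ hy hy' =>
      obtain ⟨s, hs, hAs⟩ := hy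
      obtain ⟨s', hs', hAs'⟩ := hy'
      exact ⟨fun n ↦ s n + s' n, by simpa using hs.add hs', by simp [hAs, hAs']⟩
    | smul a y _ hy =>
      obtain ⟨s, hs, hAs⟩ := hy
      exact ⟨fun n ↦ a • s n, by simpa using hs.const_smul a, by simp [hAs]⟩

end Universality

/-! ### Generations of a directed tree -/

namespace DirTree

variable {V : Type} (T : DirTree V)

theorem mem_childN_succ_iff {n : ℕ} {u w : V} :
    w ∈ T.childN (n + 1) u ↔ ∃ v ∈ T.childN n u, T.E v w := by
  induction n generalizing u with
  | zero => simp [childN, child]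
  | succ n ih =>
    calc w ∈ T.childN (n + 2) u ↔ ∃ c ∈ T.child u, ∃ v ∈ T.childN n c, T.E v w :=
          exists_congr fun c ↦ and_congr_right fun _ ↦ ih
      _ ↔ ∃ v ∈ T.childN (n + 1) u, T.E v w := by
          simp only [childN, Set.mem_ofPred_eq]
          tauto

theorem childN_succ_eq_biUnion (n : ℕ) (u : V) :
    T.childN (n + 1) u = ⋃ v ∈ T.childN n u, T.child v := by
  ext w
  simp [mem_childN_succ_iff, child]

theorem childN_finite (n : ℕ) (u : V) : (T.childN n u).Finite := by
  induction n with
  | zero => exact Set.finite_singleton u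
  | succ n ih =>
    rw [childN_succ_eq_biUnion]
    exact ih.biUnion fun v _ ↦ T.finOut v

theorem gam_eq_card (u : V) (n : ℕ) : T.gam u n = (T.childN_finite n u).toFinset.card :=
  Set.ncard_eq_toFinset_card _ _

theorem mem_childN_add {m n : ℕ} {u v w : V} (hv : v ∈ T.childN m u) (hw : w ∈ T.childN n v) :
    w ∈ T.childN (m + n) u := by
  induction n generalizing w with
  | zero => rwa [show w = v from hw]
  | succ n ih =>
    obtain ⟨x, hx, hxw⟩ := T.mem_childN_succ_iff.1 hw
    exact T.mem_childN_succ_iff.2 ⟨x, ih hx, hxw⟩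

theorem eq_of_mem_childN {n : ℕ} {u u' w : V} (h : w ∈ T.childN n u) (h' : w ∈ T.childN n u') :
    u = u' := by
  induction n generalizing w with
  | zero => exact (show w = u from h).symm.trans h'
  | succ n ih =>
    obtain ⟨v, hv, hvw⟩ := T.mem_childN_succ_iff.1 h
    obtain ⟨v', hv', hvw'⟩ := T.mem_childN_succ_iff.1 h'
    obtain rfl := T.indeg hvw hvw'
    exact ih hv hv'

theorem pairwise_disjoint_child : Pairwise (Function.onFun Disjoint T.child) :=
  fun _ _ hne ↦ Set.disjoint_left.2 fun _ h h' ↦ hne (T.indeg h h')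

section Root

variable {T} {r : V}

theorem IsRoot.exists_mem_childN (hr : T.IsRoot r) (v : V) : ∃ n, v ∈ T.childN n r := by
  have hrv := T.conn.preconnected r v
  rw [SimpleGraph.reachable_iff_reflTransGen] at hrv
  induction hrv with
  | refl => exact ⟨0, rfl⟩
  | @tail b c _ hbc ih =>
    obtain ⟨n, hn⟩ := ih
    rcases ((SimpleGraph.fromRel_adj _ _ _).1 hbc).2 with hbc | hcb
    · exact ⟨n + 1, T.mem_childN_succ_iff.2 ⟨b, hn, hbc⟩⟩
    · cases n with
      | zero =>
        obtain rfl : b = r := hn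
        exact absurd hcb (hr c)
      | succ n =>
        obtain ⟨c', hc', hcb'⟩ := T.mem_childN_succ_iff.1 hn
        exact ⟨n, T.indeg hcb hcb' ▸ hc'⟩

theorem IsRoot.countable (hr : T.IsRoot r) : Countable V :=
  Set.countable_univ_iff.1 ((Set.countable_iUnion fun n ↦
    (T.childN_finite n r).countable).mono fun v _ ↦ Set.mem_iUnion.2 (hr.exists_mem_childN v))

theorem IsRoot.le_of_mem_childN (hr : T.IsRoot r) {k n : ℕ} {u v : V}
    (hvr : v ∈ T.childN k r) (hvu : v ∈ T.childN n u) : n ≤ k := by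
  induction n generalizing k v with
  | zero => exact k.zero_le
  | succ n ih =>
    obtain ⟨w, hwu, hwv⟩ := T.mem_childN_succ_iff.1 hvu
    cases k with
    | zero =>
      obtain rfl : v = r := hvr
      exact absurd hwv (hr w)
    | succ k =>
      obtain ⟨w', hwr, hwv'⟩ := T.mem_childN_succ_iff.1 hvr
      obtain rfl := T.indeg hwv hwv'
      exact Nat.succ_le_succ (ih hwr hwu)

theorem IsRoot.eventually_notMem_childN (hr : T.IsRoot r) (v : V) :
    ∀ᶠ n in atTop, ∀ u, v ∉ T.childN n u := by
  obtain ⟨k, hk⟩ := hr.exists_mem_childN v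
  filter_upwards [eventually_gt_atTop k] with n hn u hu
  exact hn.not_ge (hr.le_of_mem_childN hk hu)

end Root

section FreeEnd

variable {T}

theorem IsLeaf.freeEnd {u : V} (hu : T.IsLeaf u) : T.FreeEnd := by
  refine ⟨u, fun n hn v hv ↦ ?_⟩
  obtain ⟨m, rfl⟩ := Nat.exists_eq_succ_of_ne_zero hn.ne'
  obtain ⟨c, hc, -⟩ := hv
  exact absurd ⟨c, hc⟩ hu

theorem FreeEnd.exists_forall_subsingleton_childN (h : T.FreeEnd) :
    ∃ v, ∀ n, (T.childN n v).Subsingleton := by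
  obtain ⟨w, hw⟩ := h
  by_cases hleaf : T.IsLeaf w
  · refine ⟨w, fun n ↦ ?_⟩
    cases n with
    | zero => exact Set.subsingleton_singleton
    | succ n => rintro x ⟨c, hc, -⟩; exact absurd ⟨c, hc⟩ hleaf
  · obtain ⟨v, hv⟩ := not_not.1 hleaf
    refine ⟨v, fun n ↦ ?_⟩
    induction n with
    | zero => exact Set.subsingleton_singleton
    | succ n ih =>
      intro x hx y hy
      obtain ⟨x', hx', hxx'⟩ := T.mem_childN_succ_iff.1 hx
      obtain ⟨y', hy', hyy'⟩ := T.mem_childN_succ_iff.1 hy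
      obtain rfl := ih hx' hy'
      have hcard := hw (n + 1) n.succ_pos x' ⟨v, hv, hx'⟩
      exact (Set.ncard_le_one (T.finOut x')).1 hcard.le x hxx' y hyy'

theorem gam_succ (u : V) (n : ℕ) :
    T.gam u (n + 1) = ∑ v ∈ (T.childN_finite n u).toFinset, (T.child v).ncard := by
  have hdisj : ((T.childN_finite n u).toFinset : Set V).PairwiseDisjoint
      fun v ↦ (T.finOut v).toFinset := fun v _ w _ hvw ↦
    Set.Finite.disjoint_toFinset.2 (T.pairwise_disjoint_child hvw)
  have hgen : (T.childN_finite (n + 1) u).toFinset =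
      (T.childN_finite n u).toFinset.biUnion fun v ↦ (T.finOut v).toFinset := by
    ext w
    simp [mem_childN_succ_iff]
  rw [gam_eq_card, hgen, Finset.card_biUnion hdisj]
  exact Finset.sum_congr rfl fun v _ ↦ (Set.ncard_eq_toFinset_card _ (T.finOut v)).symm

theorem childN_nonempty (hleafless : ∀ u, ¬ T.IsLeaf u) (u : V) (n : ℕ) :
    (T.childN n u).Nonempty := by
  induction n with
  | zero => exact Set.singleton_nonempty u
  | succ n ih =>
    obtain ⟨v, hv⟩ := ih
    obtain ⟨w, hw⟩ := not_not.1 (hleafless v)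
    exact ⟨w, T.mem_childN_succ_iff.2 ⟨v, hv, hw⟩⟩

theorem one_le_ncard_child_iff {v : V} : 1 ≤ (T.child v).ncard ↔ ¬ T.IsLeaf v :=
  (Set.ncard_pos (T.finOut v)).trans not_not.symm

theorem monotone_gam (hleafless : ∀ u, ¬ T.IsLeaf u) (u : V) : Monotone (T.gam u) := by
  refine monotone_nat_of_le_succ fun n ↦ ?_
  calc T.gam u n = ∑ _v ∈ (T.childN_finite n u).toFinset, 1 := by
        rw [gam_eq_card, Finset.card_eq_sum_ones]
    _ ≤ T.gam u (n + 1) := by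
        rw [gam_succ]
        exact Finset.sum_le_sum fun v _ ↦ one_le_ncard_child_iff.2 (hleafless v)

theorem gam_lt_gam_succ (hleafless : ∀ u, ¬ T.IsLeaf u) {n : ℕ} {u w : V}
    (hw : w ∈ T.childN n u) (hbranch : 1 < (T.child w).ncard) :
    T.gam u n < T.gam u (n + 1) := by
  calc T.gam u n = ∑ _v ∈ (T.childN_finite n u).toFinset, 1 := by
        rw [gam_eq_card, Finset.card_eq_sum_ones]
    _ < T.gam u (n + 1) := by
        rw [gam_succ]
        exact Finset.sum_lt_sum (fun v _ ↦ one_le_ncard_child_iff.2 (hleafless v))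
          ⟨w, (T.childN_finite n u).mem_toFinset.2 hw, hbranch⟩

theorem exists_gam_lt (hfree : ¬ T.FreeEnd) (u : V) (n : ℕ) : ∃ m, T.gam u n < T.gam u m := by
  have hleafless : ∀ u, ¬ T.IsLeaf u := fun u hu ↦ hfree hu.freeEnd
  obtain ⟨v, hv⟩ := childN_nonempty hleafless u n
  obtain ⟨k, w, hw, hcard⟩ : ∃ k, ∃ w ∈ T.childN k v, (T.child w).ncard ≠ 1 := by
    by_contra! h
    exact hfree ⟨v, fun k _ ↦ h k⟩
  have hbranch : 1 < (T.child w).ncard :=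
    lt_of_le_of_ne (one_le_ncard_child_iff.2 (hleafless w)) hcard.symm
  exact ⟨n + k + 1, (monotone_gam hleafless u (n.le_add_right k)).trans_lt
    (gam_lt_gam_succ hleafless (T.mem_childN_add hv hw) hbranch)⟩

theorem tendsto_gam_atTop (hfree : ¬ T.FreeEnd) (u : V) : Tendsto (T.gam u) atTop atTop := by
  refine tendsto_atTop_atTop_of_monotone' (monotone_gam (fun u hu ↦ hfree hu.freeEnd) u) fun h ↦ ?_
  obtain ⟨n, hn⟩ := Nat.sSup_mem (Set.range_nonempty (T.gam u)) h
  obtain ⟨m, hm⟩ := exists_gam_lt hfree u n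
  exact (hn ▸ hm).not_ge (le_csSup h (Set.mem_range_self m))

end FreeEnd

/-! ### The backward shift and its iterates -/

theorem bwd_apply (f : V → ℂ) (u : V) : T.bwd f u = ∑ᶠ v ∈ T.child u, f v := by
  have : Finite (T.child u) := T.finOut u
  exact (tsum_eq_finsum (Set.toFinite _)).trans (finsum_set_coe_eq_finsum_mem (T.child u))

theorem isLinearMap_bwd : IsLinearMap ℂ T.bwd where
  map_add f g := by
    ext u
    simp only [bwd_apply, Pi.add_apply]
    exact finsum_mem_add_distrib (T.finOut u)
  map_smul c f := by
    ext u
    exact tsum_mul_left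

theorem bwd_iterate_apply (n : ℕ) (f : V → ℂ) (u : V) :
    T.bwd^[n] f u = ∑ᶠ v ∈ T.childN n u, f v := by
  induction n generalizing f with
  | zero => simp [childN]
  | succ n ih =>
    rw [Function.iterate_succ_apply, ih, childN_succ_eq_biUnion,
      finsum_mem_biUnion (T.pairwise_disjoint_child.set_pairwise _) (T.childN_finite n u)
        fun v _ ↦ T.finOut v]
    simp only [bwd_apply]

theorem bwd_iterate_single_eq_zero {n : ℕ} {v : V} (hv : ∀ u, v ∉ T.childN n u) (a : ℂ) :
    T.bwd^[n] (Pi.single v a) = 0 := by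
  ext u
  rw [bwd_iterate_apply]
  refine finsum_mem_eq_zero_of_forall_eq_zero fun w hw ↦ ?_
  have hwv : w ≠ v := fun h ↦ hv u (h ▸ hw)
  rw [Pi.single_eq_of_ne hwv]

/-- The unit mass at `u` spread uniformly over the `n`-th generation below `u`, as a vector of
`ℓ^p(V)`: a preimage of that unit mass under the `n`-th iterate of the backward shift. -/
noncomputable def spread (p : ℝ≥0∞) (n : ℕ) (u : V) : lp (fun _ : V ↦ ℂ) p :=
  ∑ v ∈ (T.childN_finite n u).toFinset, lp.single p v (T.gam u n : ℂ)⁻¹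

theorem spread_apply (p : ℝ≥0∞) (n : ℕ) (u v : V) :
    T.spread p n u v = if v ∈ T.childN n u then (T.gam u n : ℂ)⁻¹ else 0 := by
  rw [spread, lp.coeFn_sum, Finset.sum_apply]
  simp only [lp.single_apply, Finset.sum_pi_single, Set.Finite.mem_toFinset]

theorem bwd_iterate_spread (p : ℝ≥0∞) {n : ℕ} {u : V} (hne : (T.childN n u).Nonempty) :
    T.bwd^[n] (T.spread p n u) = Pi.single u 1 := by
  ext w
  rw [bwd_iterate_apply]
  obtain rfl | hwu := eq_or_ne w u
  · have hgam : (T.gam w n : ℂ) ≠ 0 :=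
      Nat.cast_ne_zero.2 ((Set.ncard_pos (T.childN_finite n w)).2 hne).ne'
    calc ∑ᶠ v ∈ T.childN n w, T.spread p n w v
        = ∑ᶠ v ∈ T.childN n w, (T.gam w n : ℂ)⁻¹ :=
          finsum_mem_congr rfl fun v hv ↦ by rw [spread_apply, if_pos hv]
      _ = T.gam w n * (T.gam w n : ℂ)⁻¹ := by
          rw [finsum_mem_eq_finite_toFinset_sum _ (T.childN_finite n w), Finset.sum_const,
            nsmul_eq_mul, ← gam_eq_card]
      _ = (Pi.single w 1 : V → ℂ) w := by rw [mul_inv_cancel₀ hgam, Pi.single_eq_same]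
  · rw [Pi.single_eq_of_ne hwu]
    refine finsum_mem_eq_zero_of_forall_eq_zero fun v hv ↦ ?_
    rw [spread_apply, if_neg fun hv' ↦ hwu (T.eq_of_mem_childN hv hv')]

theorem norm_spread {p : ℝ≥0∞} (hp : 0 < p.toReal) {n : ℕ} {u : V} (hgam : T.gam u n ≠ 0) :
    ‖T.spread p n u‖ = (T.gam u n : ℝ) ^ (1 / p.toReal - 1) := by
  have hpos : (0 : ℝ) < T.gam u n := by positivity
  have hpow : ‖T.spread p n u‖ ^ p.toReal = ((T.gam u n : ℝ) ^ (1 / p.toReal - 1)) ^ p.toReal := by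
    calc ‖T.spread p n u‖ ^ p.toReal
        = T.gam u n * ‖(T.gam u n : ℂ)⁻¹‖ ^ p.toReal := by
          rw [spread, lp.norm_sum_single hp (fun _ ↦ (T.gam u n : ℂ)⁻¹), Finset.sum_const,
            nsmul_eq_mul, ← gam_eq_card]
      _ = (T.gam u n : ℝ) ^ (1 - p.toReal) := by
          rw [norm_inv, Complex.norm_natCast, Real.inv_rpow hpos.le, Real.rpow_sub hpos,
            Real.rpow_one, div_eq_mul_inv]
      _ = ((T.gam u n : ℝ) ^ (1 / p.toReal - 1)) ^ p.toReal := by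
          rw [← Real.rpow_mul hpos.le, sub_mul, one_div_mul_cancel hp.ne', one_mul]
  exact Real.rpow_left_injOn hp.ne' (lp.norm_nonneg' _) (Real.rpow_nonneg hpos.le _) hpow

theorem tendsto_spread_zero {p : ℝ≥0∞} [Fact (1 ≤ p)] (hp : 1 < p.toReal) {u : V}
    (hgam : Tendsto (T.gam u) atTop atTop) :
    Tendsto (fun n ↦ T.spread p n u) atTop (nhds 0) := by
  have hp0 : 0 < p.toReal := one_pos.trans hp
  have hexp : 0 < 1 - 1 / p.toReal := sub_pos.2 ((div_lt_one hp0).2 hp)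
  rw [tendsto_zero_iff_norm_tendsto_zero]
  refine ((tendsto_rpow_neg_atTop hexp).comp
    ((tendsto_natCast_atTop_atTop (R := ℝ)).comp hgam)).congr' ?_
  filter_upwards [hgam.eventually_ne_atTop 0] with n hn
  rw [T.norm_spread hp0 hn, Function.comp_apply, Function.comp_apply, neg_sub]

end DirTree

/-! ### Unweighted spaces as Mathlib's `lp` -/

section Lp

variable {ι 𝕜 : Type*} [NormedField 𝕜] {p : ℝ≥0∞} [Fact (1 ≤ p)]

theorem dense_span_range_lpSingle_one (hp : p ≠ ∞) :
    Dense (Submodule.span 𝕜 (Set.range fun i : ι ↦ lp.single (E := fun _ ↦ 𝕜) p i 1) :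
      Set (lp (fun _ : ι ↦ 𝕜) p)) := by
  refine fun f ↦ mem_closure_of_tendsto (lp.hasSum_single hp f) (.of_forall fun s ↦ ?_)
  refine Submodule.sum_mem _ fun i _ ↦ ?_
  have hsmul : lp.single (E := fun _ ↦ 𝕜) p i (f i) =
      f i • lp.single (E := fun _ ↦ 𝕜) p i 1 := by
    rw [← lp.single_smul, smul_eq_mul, mul_one]
  rw [hsmul]
  exact Submodule.smul_mem _ _ (Submodule.subset_span (Set.mem_range_self i))

theorem separableSpace_lp [Countable ι] [TopologicalSpace.SeparableSpace 𝕜] (hp : p ≠ ∞) :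
    TopologicalSpace.SeparableSpace (lp (fun _ : ι ↦ 𝕜) p) :=
  (dense_span_range_lpSingle_one hp).isSeparable_iff.1 (Set.countable_range _).isSeparable.span

end Lp

section Unweighted

variable {V : Type} {q : ℝ}

theorem memLp'_one_iff (hq : 0 < q) {f : V → ℂ} :
    MemLp' (fun _ ↦ 1) q f ↔ Memℓp f (ENNReal.ofReal q) := by
  have hq' : (ENNReal.ofReal q).toReal = q := ENNReal.toReal_ofReal hq.le
  rw [memℓp_gen_iff (by rwa [hq']), hq']
  simp only [MemLp', mul_one]

theorem pNorm_one_eq_norm (hq : 0 < q) (f : lp (fun _ : V ↦ ℂ) (ENNReal.ofReal q)) :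
    pNorm (fun _ ↦ 1) q f = ‖f‖ := by
  have hq' : (ENNReal.ofReal q).toReal = q := ENNReal.toReal_ofReal hq.le
  rw [lp.norm_eq_tsum_rpow (by rwa [hq']), hq']
  simp only [pNorm, mul_one]

theorem norm_apply_le_pNorm_one (hq : 0 < q) {f : V → ℂ} (hf : MemLp' (fun _ ↦ 1) q f) (v : V) :
    ‖f v‖ ≤ pNorm (fun _ ↦ 1) q f := by
  let F : lp (fun _ : V ↦ ℂ) (ENNReal.ofReal q) := ⟨f, (memLp'_one_iff hq).1 hf⟩
  exact (lp.norm_apply_le_norm (ENNReal.ofReal_pos.2 hq).ne' F v).trans_eq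
    (pNorm_one_eq_norm hq F).symm

variable {A : (V → ℂ) → (V → ℂ)}

theorem Hypercyclic.exists_lt_norm_iterate_apply (hq : 0 < q)
    (h : Hypercyclic (fun _ ↦ 1) q A) :
    ∃ f : V → ℂ, MemLp' (fun _ ↦ 1) q f ∧ ∀ v M, ∃ n, M < ‖A^[n] f v‖ := by
  obtain ⟨f, hf, hdense⟩ := h
  refine ⟨f, hf, fun v M ↦ ?_⟩
  let c : ℂ := ((|M| + 1 : ℝ) : ℂ)
  have hc : ‖c‖ = |M| + 1 := Complex.norm_of_nonneg (by positivity)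
  have hmem : MemLp' (fun _ ↦ 1) q (Pi.single v c : V → ℂ) :=
    (memLp'_one_iff hq).2 (lp.memℓp (lp.single (E := fun _ ↦ ℂ) _ v c))
  obtain ⟨n, hn, hlt⟩ := hdense (Pi.single v c) hmem 1 one_pos
  have happrox : ‖A^[n] f v - c‖ < 1 := by
    simpa only [Pi.sub_apply, Pi.single_eq_same] using
      (norm_apply_le_pNorm_one hq hn v).trans_lt hlt
  refine ⟨n, ?_⟩
  linarith [le_abs_self M, norm_sub_norm_le c (A^[n] f v), norm_sub_rev c (A^[n] f v)]

theorem coe_iterate_lp {p : ℝ≥0∞} {B : lp (fun _ : V ↦ ℂ) p → lp (fun _ : V ↦ ℂ) p}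
    (hB : ∀ f, ⇑(B f) = A f) (n : ℕ) (f : lp (fun _ : V ↦ ℂ) p) : ⇑(B^[n] f) = A^[n] f :=
  (Function.Semiconj.iterate_right (f := fun g : lp (fun _ : V ↦ ℂ) p ↦ (g : V → ℂ)) hB n).eq f

variable [Fact (1 ≤ ENNReal.ofReal q)]

theorem hypercyclic_of_dense_range_iterate
    {B : lp (fun _ : V ↦ ℂ) (ENNReal.ofReal q) → lp (fun _ : V ↦ ℂ) (ENNReal.ofReal q)}
    (hB : ∀ f, ⇑(B f) = A f)
    {f : lp (fun _ : V ↦ ℂ) (ENNReal.ofReal q)} (hf : Dense (Set.range fun n ↦ B^[n] f)) :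
    Hypercyclic (fun _ ↦ 1) q A := by
  have hq : 0 < q := one_pos.trans_le (ENNReal.one_le_ofReal.1 Fact.out)
  refine ⟨f, (memLp'_one_iff hq).2 (lp.memℓp f), fun g hg ε hε ↦ ?_⟩
  let G : lp (fun _ : V ↦ ℂ) (ENNReal.ofReal q) := ⟨g, (memLp'_one_iff hq).1 hg⟩
  obtain ⟨_, ⟨n, rfl⟩, hn⟩ := hf.exists_dist_lt G hε
  have hsub : A^[n] f - g = (B^[n] f - G : lp (fun _ : V ↦ ℂ) (ENNReal.ofReal q)) := by
    rw [lp.coeFn_sub, coe_iterate_lp hB]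
  rw [dist_comm, dist_eq_norm] at hn
  refine ⟨n, ?_, ?_⟩
  · rw [hsub]
    exact (memLp'_one_iff hq).2 (lp.memℓp _)
  · rwa [hsub, pNorm_one_eq_norm hq]

theorem BoundedOn.exists_continuousLinearMap (hA : IsLinearMap ℂ A)
    (hb : BoundedOn (fun _ ↦ 1) q A) :
    ∃ B : lp (fun _ : V ↦ ℂ) (ENNReal.ofReal q) →L[ℂ] lp (fun _ : V ↦ ℂ) (ENNReal.ofReal q),
      ∀ f, ⇑(B f) = A f := by
  have hq : 0 < q := one_pos.trans_le (ENNReal.one_le_ofReal.1 Fact.out)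
  obtain ⟨C, -, hC⟩ := hb
  have hCf (f : lp (fun _ : V ↦ ℂ) (ENNReal.ofReal q)) :=
    hC f ((memLp'_one_iff hq).2 (lp.memℓp f))
  let L : lp (fun _ : V ↦ ℂ) (ENNReal.ofReal q) →ₗ[ℂ] lp (fun _ : V ↦ ℂ) (ENNReal.ofReal q) :=
    { toFun f := ⟨A f, (memLp'_one_iff hq).1 (hCf f).1⟩
      map_add' f g := lp.ext (hA.map_add f g)
      map_smul' c f := lp.ext (hA.map_smul c f) }
  refine ⟨L.mkContinuous C fun f ↦ ?_, fun f ↦ rfl⟩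
  rw [← pNorm_one_eq_norm hq, ← pNorm_one_eq_norm hq]
  exact (hCf f).2

end Unweighted

/-! ### Free ends and hypercyclicity -/

namespace DirTree

variable {V : Type} {T : DirTree V}

theorem norm_bwd_iterate_apply_le {q : ℝ} (hq : 0 < q) {f : V → ℂ} (hf : MemLp' (fun _ ↦ 1) q f)
    {n : ℕ} {v : V} (hv : (T.childN n v).Subsingleton) :
    ‖T.bwd^[n] f v‖ ≤ pNorm (fun _ ↦ 1) q f := by
  rw [bwd_iterate_apply]
  obtain hempty | ⟨w, hw⟩ := hv.eq_empty_or_singleton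
  · rw [hempty, finsum_mem_empty, norm_zero]
    exact (norm_nonneg (f v)).trans (norm_apply_le_pNorm_one hq hf v)
  · rw [hw, finsum_mem_singleton]
    exact norm_apply_le_pNorm_one hq hf w

theorem FreeEnd.not_hypercyclic_bwd {q : ℝ} (hq : 0 < q) (hfree : T.FreeEnd) :
    ¬ Hypercyclic (fun _ ↦ 1) q T.bwd := by
  intro h
  obtain ⟨v, hv⟩ := hfree.exists_forall_subsingleton_childN
  obtain ⟨f, hf, hunbounded⟩ := h.exists_lt_norm_iterate_apply hq
  obtain ⟨n, hn⟩ := hunbounded v (pNorm (fun _ ↦ 1) q f)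
  exact hn.not_ge (norm_bwd_iterate_apply_le hq hf (hv n))

theorem exists_dense_range_iterate_of_not_freeEnd {p : ℝ≥0∞} [Fact (1 ≤ p)] (hp : 1 < p.toReal)
    {r : V} (hr : T.IsRoot r) (hfree : ¬ T.FreeEnd)
    {B : lp (fun _ : V ↦ ℂ) p →L[ℂ] lp (fun _ : V ↦ ℂ) p}
    (hB : ∀ f, ⇑(B f) = T.bwd f) :
    ∃ f, Dense (Set.range fun n ↦ B^[n] f) := by
  have hp_top : p ≠ ∞ := fun h ↦ absurd hp (by simp [h])
  have := hr.countable
  have := separableSpace_lp (ι := V) (𝕜 := ℂ) hp_top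
  have := UniformSpace.secondCountable_of_separable (lp (fun _ : V ↦ ℂ) p)
  have hspan := dense_span_range_lpSingle_one (ι := V) (𝕜 := ℂ) hp_top
  have hBn (n : ℕ) (f : lp (fun _ : V ↦ ℂ) p) : ⇑((B ^ n) f) = T.bwd^[n] f := by
    rw [FunLike.coe_pow_eq_iterate, coe_iterate_lp hB]
  simp_rw [← FunLike.coe_pow_eq_iterate]
  refine exists_dense_range_of_dense_span (A := fun n ↦ B ^ n) hspan hspan ?_ ?_
  · rintro _ ⟨v, rfl⟩
    refine tendsto_const_nhds.congr' ?_
    filter_upwards [hr.eventually_notMem_childN v] with n hn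
    exact lp.ext ((hBn n _).trans (T.bwd_iterate_single_eq_zero hn 1)).symm
  · rintro _ ⟨u, rfl⟩
    refine ⟨fun n ↦ T.spread p n u, T.tendsto_spread_zero hp (tendsto_gam_atTop hfree u),
      fun n ↦ lp.ext ((hBn n _).trans (T.bwd_iterate_spread p ?_))⟩
    exact childN_nonempty (fun v hv ↦ hfree hv.freeEnd) u n

end DirTree

theorem stmt_13_general {V : Type} (T : DirTree V) (hroot : ∃ r : V, T.IsRoot r)
    (q : ℝ) (hq : 1 < q) (hb : BoundedOn (fun _ : V ↦ (1 : ℝ)) q T.bwd) :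
    Hypercyclic (fun _ : V ↦ (1 : ℝ)) q T.bwd ↔ ¬ T.FreeEnd := by
  have hq0 : 0 < q := one_pos.trans hq
  have : Fact (1 ≤ ENNReal.ofReal q) := ⟨ENNReal.one_le_ofReal.2 hq.le⟩
  refine ⟨fun h hfree ↦ hfree.not_hypercyclic_bwd hq0 h, fun hfree ↦ ?_⟩
  obtain ⟨r, hr⟩ := hroot
  obtain ⟨B, hB⟩ := hb.exists_continuousLinearMap T.isLinearMap_bwd
  have hexp : 1 < (ENNReal.ofReal q).toReal := by rwa [ENNReal.toReal_ofReal hq0.le]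
  obtain ⟨f, hf⟩ := DirTree.exists_dense_range_iterate_of_not_freeEnd hexp hr hfree hB
  exact hypercyclic_of_dense_range_iterate hB hf

/-- For a leafless rooted directed tree, `1 < q < ∞`, constant
weights `λ_v = 1`, and bounded backward shift `B` on `L^q`: `B` is hypercyclic
if and only if the tree has no free ends. -/
theorem stmt_13 {V : Type} [Countable V] [Infinite V] (T : DirTree V)
    (hleafless : ∀ u : V, ¬ T.IsLeaf u) (hroot : ∃ r : V, T.IsRoot r)
    (q : ℝ) (hq : 1 < q)
    (hb : BoundedOn (fun _ : V => (1 : ℝ)) q T.bwd) :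
    Hypercyclic (fun _ : V => (1 : ℝ)) q T.bwd ↔ ¬ T.FreeEnd :=
  stmt_13_general T hroot q hq hb
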